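/- Let (W, S) be an arbitrary Coxeter system and let w ∈ W be fully commutative. Then the elements of the left descent set 𝓛(w) pairwise commute, and the elements of the right descent set 𝓡(w) pairwise commute; equivalently, for s, t ∈ S with m(s,t) ≥ 3 it is impossible that both ℓ(sw) < ℓ(w) and ℓ(tw) < ℓ(w), and likewise on the right. -/

import Mathlib

open CoxeterSystem

variable {B W : Type*} [Group W] {M : CoxeterMatrix B} (cs : CoxeterSystem M W)

/-- `m(s,t) ≥ 3`: `s` and `t` are distinct noncommuting generators
(`M s t = 0` encodes `m(s,t) = ∞`). -/
def Noncomm (M : CoxeterMatrix B) (s t : B) : Prop := M s t = 0 ∨ 3 ≤ M s t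

/-- The longest element `w_{st}` of the rank-2 parabolic subgroup `⟨s,t⟩`
(meaningful when `3 ≤ M s t < ∞`). -/
def longest (s t : B) : W := cs.wordProd (alternatingWord s t (M s t))

/-- `w` is complex: it admits a reduced factorization `x₁ · w_{st} · x₂` where `w_{st}`
is the longest element of a rank-2 parabolic subgroup `⟨s,t⟩` with `3 ≤ m(s,t) < ∞`. -/
def IsComplex (w : W) : Prop :=
  ∃ s t : B, 3 ≤ M s t ∧ ∃ x₁ x₂ : W,
    w = x₁ * longest cs s t * x₂ ∧
    cs.length w = cs.length x₁ + cs.length (longest cs s t : W) + cs.length x₂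

/-- `w` is fully commutative, i.e. `w ∈ W_c`. -/
def FullyComm (w : W) : Prop := ¬ IsComplex cs w

/-- `x` is weakly complex: `x` is complex and `x = s·u` reduced with `u` fully commutative. -/
def IsWeaklyComplex (x : W) : Prop :=
  IsComplex cs x ∧ ∃ (s : B) (u : W), FullyComm cs u ∧ x = cs.simple s * u ∧
    cs.length x = 1 + cs.length u

/-- The alternating product `t s t s ⋯` with `k` factors, beginning with `t`. -/
def altProd (t s : B) (k : ℕ) : W :=
  cs.wordProd ((List.range k).map (fun i => if i % 2 = 0 then t else s))

/-- The left descent set `𝓛(w)`. -/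
def leftDescents (w : W) : Set B := {i | cs.IsLeftDescent w i}

/-- The right descent set `𝓡(w)`. -/
def rightDescents (w : W) : Set B := {i | cs.IsRightDescent w i}

/-- `w` is a reduced product of distinct pairwise commuting generators. -/
def IsCommProd (w : W) : Prop :=
  ∃ l : List B, l.Nodup ∧ (∀ u ∈ l, ∀ u' ∈ l, u ≠ u' → M u u' = 2) ∧
    cs.IsReduced l ∧ w = cs.wordProd l

/-- `y` is left star reducible to `x` with respect to the pair `{s,t}`:
`x` and `y` lie in the same left `{s,t}`-string and `ℓ(x) = ℓ(y) − 1`. -/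
def LeftStarReducible (s t : B) (y x : W) : Prop :=
  Noncomm M s t ∧
  ((cs.IsLeftDescent y s ∧ ¬ cs.IsLeftDescent y t ∧ x = cs.simple s * y ∧
      cs.IsLeftDescent x t) ∨
   (cs.IsLeftDescent y t ∧ ¬ cs.IsLeftDescent y s ∧ x = cs.simple t * y ∧
      cs.IsLeftDescent x s))

/-- `y` is right star reducible to `x` with respect to the pair `{s,t}`. -/
def RightStarReducible (s t : B) (y x : W) : Prop :=
  Noncomm M s t ∧
  ((cs.IsRightDescent y s ∧ ¬ cs.IsRightDescent y t ∧ x = y * cs.simple s ∧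
      cs.IsRightDescent x t) ∨
   (cs.IsRightDescent y t ∧ ¬ cs.IsRightDescent y s ∧ x = y * cs.simple t ∧
      cs.IsRightDescent x s))

/-- `y` is star reducible to `x`: there is a (possibly empty) chain of left and right
star reductions from `y` to `x`. -/
def StarReducible (y x : W) : Prop :=
  Relation.ReflTransGen
    (fun a b => ∃ s t : B, LeftStarReducible cs s t a b ∨ RightStarReducible cs s t a b) y x

/-- Property F: every fully commutative element is star reducible to a reduced product of
distinct pairwise commuting generators. -/
def PropertyF : Prop := ∀ w : W, FullyComm cs w → ∃ x : W, StarReducible cs w x ∧ IsCommProd cs x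

/-- `n(w)`: the maximum `k` such that `w` admits a reduced factorization `w = w₁·w₂·w₃`
with `w₂` a reduced product of `k` distinct pairwise commuting generators. -/
noncomputable def nval (w : W) : ℕ :=
  sSup {k | ∃ w₁ w₂ w₃ : W, w = w₁ * w₂ * w₃ ∧
    cs.length w = cs.length w₁ + cs.length w₂ + cs.length w₃ ∧
    IsCommProd cs w₂ ∧ cs.length w₂ = k}

/-- The Bruhat order: `x ≤ w` iff some reduced word for `w` has a subword that is a
reduced word for `x`. -/
def BruhatLE (x w : W) : Prop :=
  ∃ l l' : List B, cs.IsReduced l ∧ cs.wordProd l = w ∧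
    l'.Sublist l ∧ cs.IsReduced l' ∧ cs.wordProd l' = x

/-- `w = wI · wII` is the coset decomposition of `w` with respect to `I = {s,t}`:
`wI ∈ W_I`, `𝓛(wII) ∩ I = ∅` and `ℓ(w) = ℓ(wI) + ℓ(wII)`. -/
def CosetDecompL (s t : B) (w wI wII : W) : Prop :=
  w = wI * wII ∧ wI ∈ Subgroup.closure {cs.simple s, cs.simple t} ∧
  ¬ cs.IsLeftDescent wII s ∧ ¬ cs.IsLeftDescent wII t ∧
  cs.length w = cs.length wI + cs.length wII

/-- `w = wII · wI` is the right coset decomposition of `w` with respect to `I = {s,t}`: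
`wI ∈ W_I`, `𝓡(wII) ∩ I = ∅` and `ℓ(w) = ℓ(wII) + ℓ(wI)`. -/
def CosetDecompR (s t : B) (w wII wI : W) : Prop :=
  w = wII * wI ∧ wI ∈ Subgroup.closure {cs.simple s, cs.simple t} ∧
  ¬ cs.IsRightDescent wII s ∧ ¬ cs.IsRightDescent wII t ∧
  cs.length w = cs.length wII + cs.length wI

/-- `k_ε(J) = (−1)^{|J ∩ ε⁻¹(0)|}` for a set `J` of generators. -/
noncomputable def kSet (ε : B → Bool) (J : Set B) : ℤ :=
  (-1) ^ (J ∩ {i | ε i = false}).ncard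

/-- `k_ε(w) = k_ε(𝓛(w)) · k_ε(𝓡(w))`. -/
noncomputable def kElt (ε : B → Bool) (w : W) : ℤ :=
  kSet ε (leftDescents cs w) * kSet ε (rightDescents cs w)

/-!
The heart of the matter is that an element `w` with right descents `s` and `t` factors as a reduced
product `v * w_{st}`, where `m(s,t)` is necessarily finite. Suppose `w = v * u` is reduced, with `u`
the alternating word of length `k < m(s,t)` in `s` and `t` that ends in `t`. By the exchange
property, multiplying `w` on the right by its descent `s` deletes a letter of this factorization. A
deletion inside `u` would give `(st) ^ (j + 1) = 1` for some `j < k`, which is impossible because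
`st` has order `m(s,t)`; so the letter comes from `v`, and `w = v' * u * s` is again reduced, with a
longer alternating word. Left descents are right descents of `w⁻¹`, and `w_{st}` is an involution.

That `st` has order exactly `m(s,t)` is seen in the geometric representation, where it rotates the
plane of `s` and `t` by `2π / m(s,t)`. The exchange property comes from the action of `W` on signed
conjugates, which keeps track of the parity of the occurrences of a reflection in an inversion
sequence.
-/

section ChebyshevRotation

open Module Polynomial.Chebyshev

theorem sin_pi_div_natCast_ne_zero {m : ℕ} (hm : 2 ≤ m) : Real.sin (Real.pi / m) ≠ 0 := by
  have hm' : (1 : ℝ) < m := by exact_mod_cast hm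
  exact (Real.sin_pos_of_pos_of_lt_pi (by positivity)
    (div_lt_self Real.pi_pos hm')).ne'

theorem eval_U_cos_pi_div_add_two_mul {m : ℕ} (hm : 2 ≤ m) (n : ℤ) :
    (U ℝ (n + 2 * m)).eval (Real.cos (Real.pi / m)) =
      (U ℝ n).eval (Real.cos (Real.pi / m)) := by
  have hm' : (m : ℝ) ≠ 0 := by positivity
  have hangle : ((n + 2 * m : ℤ) + 1 : ℝ) * (Real.pi / m) =
      (n + 1) * (Real.pi / m) + 2 * Real.pi := by
    push_cast
    field_simp
    ring
  refine mul_right_cancel₀ (sin_pi_div_natCast_ne_zero hm) ?_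
  rw [U_real_cos, U_real_cos, hangle, Real.sin_add_two_pi]

theorem dvd_of_eval_U_cos_pi_div {m k : ℕ}
    (h₀ : (U ℝ (2 * k)).eval (Real.cos (Real.pi / m)) = 1)
    (h₁ : (U ℝ (2 * k - 1)).eval (Real.cos (Real.pi / m)) = 0) : m ∣ k := by
  obtain rfl | rfl | hm : m = 0 ∨ m = 1 ∨ 2 ≤ m := by lia
  · have hk : k = 0 := by simpa [U_eval_one] using h₁
    rw [hk]
  · exact one_dvd k
  set θ := Real.pi / m with hθ
  have hsinθ : Real.sin θ ≠ 0 := sin_pi_div_natCast_ne_zero hm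
  have hsin : Real.sin (2 * k * θ) = 0 := by
    have h := U_real_cos θ (2 * k - 1)
    rw [h₁, zero_mul] at h
    rw [h]
    push_cast
    ring_nf
  have hcos : Real.cos (2 * k * θ) = 1 := by
    have h := U_real_cos θ (2 * k)
    rw [h₀] at h
    push_cast at h
    rw [one_mul, add_one_mul, Real.sin_add, hsin, zero_mul, zero_add] at h
    exact (mul_eq_right₀ hsinθ).mp h.symm
  obtain ⟨q, hq⟩ := (Real.cos_eq_one_iff _).mp hcos
  have hqm : (q * m : ℝ) = k := by
    rw [hθ] at hq
    field_simp at hq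
    exact hq
  exact Int.natCast_dvd_natCast.mp ⟨q, by rw [mul_comm]; exact_mod_cast hqm.symm⟩

variable {R V : Type*} [CommRing R] [AddCommGroup V] [Module R V] {f g : Dual R V} {x y : V} {c : R}

theorem reflection_mul_reflection_pow_apply_eval_U (hfx : f x = 2) (hgy : g y = 2)
    (hfy : f y = -2 * c) (hgx : g x = -2 * c) (k : ℕ) (n : ℤ) :
    ((reflection hfx * reflection hgy) ^ k) ((U R n).eval c • x + (U R (n - 1)).eval c • y) =
      (U R (n + 2 * k)).eval c • x + (U R (n + 2 * k - 1)).eval c • y := by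
  induction k generalizing n with
  | zero => simp
  | succ k ih =>
    have rotate : (reflection hfx * reflection hgy)
        ((U R n).eval c • x + (U R (n - 1)).eval c • y) =
          (U R (n + 2)).eval c • x + (U R (n + 2 - 1)).eval c • y := by
      rw [U_add_two, show n + 2 - 1 = n + 1 by ring, U_add_one]
      simp only [LinearEquiv.mul_apply, reflection_apply, map_add, map_sub, map_smul, hfx, hgy,
        hfy, hgx, Polynomial.eval_sub, Polynomial.eval_mul, Polynomial.eval_X,
        Polynomial.eval_ofNat]
      module
    rw [pow_succ, LinearEquiv.mul_apply, rotate, ih]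
    push_cast
    ring_nf

theorem reflection_mul_reflection_pow_eq_one (hfx : f x = 2) (hgy : g y = 2)
    (hfy : f y = -2 * c) (hgx : g x = -2 * c) (hc : IsUnit (2 * (1 - c ^ 2))) {k : ℕ}
    (hk : ∀ n : ℤ, (U R (n + 2 * k)).eval c = (U R n).eval c) :
    (reflection hfx * reflection hgy) ^ k = 1 := by
  set ρ := reflection hfx * reflection hgy with hρ
  have fix (n : ℤ) : (ρ ^ k) ((U R n).eval c • x + (U R (n - 1)).eval c • y) =
      (U R n).eval c • x + (U R (n - 1)).eval c • y := by
    rw [reflection_mul_reflection_pow_apply_eval_U hfx hgy hfy hgx, hk,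
      add_sub_right_comm, hk]
  have fix_x : (ρ ^ k) x = x := by simpa using fix 0
  have fix_y : (ρ ^ k) y = y := by simpa using fix (-1)
  have fix_ker {u : V} (hfu : f u = 0) (hgu : g u = 0) : (ρ ^ k) u = u := by
    have hu : ρ u = u := by simp [hρ, LinearEquiv.mul_apply, reflection_apply, hfu, hgu]
    rw [LinearEquiv.coe_pow]
    exact Function.iterate_fixed hu k
  obtain ⟨d, hd⟩ := hc.exists_left_inv
  ext v
  -- By Cramer's rule, `d • (a • x + b • y)` is the component of `v` in the span of `x` and `y`.
  set p := d • ((f v + c * g v) • x + (g v + c * f v) • y) with hp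
  have fix_p : (ρ ^ k) p = p := by rw [hp, map_smul, map_add, map_smul, map_smul, fix_x, fix_y]
  have fix_rest : (ρ ^ k) (v - p) = v - p := by
    apply fix_ker
    · simp only [hp, map_sub, map_add, map_smul, hfx, hfy, smul_eq_mul]
      linear_combination -f v * hd
    · simp only [hp, map_sub, map_add, map_smul, hgx, hgy, smul_eq_mul]
      linear_combination -g v * hd
  rw [map_sub, fix_p, sub_left_inj] at fix_rest
  exact fix_rest

end ChebyshevRotation

section GeometricRepresentation

variable (M)

/-- The coroot functional `v ↦ 2⟨eᵢ, v⟩` of the geometric representation, where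
`⟨eᵢ, eⱼ⟩ = -cos (π / M i j)`. For `M i j = 0`, which encodes `∞`, the junk value `π / 0 = 0` gives
the usual `⟨eᵢ, eⱼ⟩ = -1`. -/
noncomputable def geomCoroot (i : B) : Module.Dual ℝ (B →₀ ℝ) :=
  Finsupp.linearCombination ℝ fun j => -2 * Real.cos (Real.pi / M i j)

theorem geomCoroot_single (i j : B) :
    geomCoroot M i (Finsupp.single j 1) = -2 * Real.cos (Real.pi / M i j) := by
  simp [geomCoroot]

theorem geomCoroot_single_swap (i j : B) :
    geomCoroot M j (Finsupp.single i 1) = -2 * Real.cos (Real.pi / M i j) := by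
  rw [geomCoroot_single, M.symmetric]

theorem geomCoroot_single_self (i : B) : geomCoroot M i (Finsupp.single i 1) = 2 := by
  simp [geomCoroot_single]

/-- The reflection by which the `i`-th generator acts in the geometric representation. -/
noncomputable def geomReflection (i : B) : (B →₀ ℝ) ≃ₗ[ℝ] (B →₀ ℝ) :=
  Module.reflection (geomCoroot_single_self M i)

theorem isLiftable_geomReflection : M.IsLiftable (geomReflection M) := by
  intro i j
  rcases eq_or_ne i j with rfl | hij
  · rw [M.diagonal, pow_one]
    exact mul_eq_one_iff_eq_inv.mpr (Module.reflection_inv _).symm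
  have hne_one : M i j ≠ 1 := M.off_diagonal i j hij
  obtain h₀ | hm : M i j = 0 ∨ 2 ≤ M i j := by lia
  · rw [h₀, pow_zero]
  have hsin := sin_pi_div_natCast_ne_zero hm
  refine reflection_mul_reflection_pow_eq_one (geomCoroot_single_self M i)
    (geomCoroot_single_self M j) (geomCoroot_single M i j) (geomCoroot_single_swap M i j) ?_
    (eval_U_cos_pi_div_add_two_mul hm)
  rw [← Real.sin_sq, isUnit_iff_ne_zero]
  positivity

theorem dvd_of_geomReflection_mul_geomReflection_pow_eq_one {i j : B} {k : ℕ}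
    (h : (geomReflection M i * geomReflection M j) ^ k = 1) : M i j ∣ k := by
  rcases eq_or_ne i j with rfl | hij
  · rw [M.diagonal]
    exact one_dvd k
  have hrot := reflection_mul_reflection_pow_apply_eval_U (geomCoroot_single_self M i)
    (geomCoroot_single_self M j) (geomCoroot_single M i j) (geomCoroot_single_swap M i j) k 0
  rw [← geomReflection, ← geomReflection, h] at hrot
  apply dvd_of_eval_U_cos_pi_div
  · simpa [hij] using (DFunLike.congr_fun hrot i).symm
  · simpa [hij.symm] using (DFunLike.congr_fun hrot j).symm

end GeometricRepresentation

theorem orderOf_simple_mul_simple (i j : B) : orderOf (cs.simple i * cs.simple j) = M i j := by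
  refine Nat.dvd_antisymm (orderOf_dvd_of_pow_eq_one (cs.simple_mul_simple_pow i j)) ?_
  apply dvd_of_geomReflection_mul_geomReflection_pow_eq_one M
  have h := congrArg (cs.lift ⟨geomReflection M, isLiftable_geomReflection M⟩)
    (pow_orderOf_eq_one (cs.simple i * cs.simple j))
  simpa only [map_pow, map_mul, lift_apply_simple, map_one] using h

theorem rightInvSeq_append (ω ω' : List B) :
    cs.rightInvSeq (ω ++ ω') =
      (cs.rightInvSeq ω).map (MulAut.conj (cs.wordProd ω')⁻¹) ++ cs.rightInvSeq ω' := by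
  induction ω with
  | nil => simp
  | cons i ω ih => simp [rightInvSeq, ih, wordProd_append, mul_assoc]

theorem rightInvSeq_alternatingWord (i j : B) (k : ℕ) :
    cs.rightInvSeq (alternatingWord i j k) =
      ((List.range k).map fun n => cs.simple j * (cs.simple i * cs.simple j) ^ n).reverse := by
  induction k generalizing i j with
  | zero => simp [alternatingWord]
  | succ k ih =>
    have conj_pow (n : ℕ) : MulAut.conj (cs.simple j)
        (cs.simple i * (cs.simple j * cs.simple i) ^ n) =
          cs.simple j * (cs.simple i * cs.simple j) ^ (n + 1) := by
      rw [MulAut.conj_apply, inv_simple, ← mul_pow_mul, pow_succ]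
      simp only [mul_assoc]
    rw [alternatingWord_succ, rightInvSeq_concat, ih, List.range_succ_eq_map, List.map_cons,
      List.reverse_cons, List.map_reverse, List.map_map, List.map_map, List.concat_eq_append]
    simp [Function.comp_def, conj_pow]

theorem simple_notMem_rightInvSeq_alternatingWord {i j : B} {k : ℕ} (hk : M i j = 0 ∨ k < M i j) :
    cs.simple i ∉ cs.rightInvSeq (alternatingWord i j k) := by
  rw [rightInvSeq_alternatingWord, List.mem_reverse, List.mem_map]
  rintro ⟨n, hn, h⟩
  have hpow : (cs.simple i * cs.simple j) ^ (n + 1) = 1 := by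
    rw [pow_succ', mul_assoc, h, simple_mul_simple_self]
  have hdvd := orderOf_simple_mul_simple cs i j ▸ orderOf_dvd_of_pow_eq_one hpow
  rw [List.mem_range] at hn
  rcases hk with h₀ | hk
  · rw [h₀, zero_dvd_iff] at hdvd
    lia
  · have := Nat.le_of_dvd n.succ_pos hdvd
    lia

/-- The action of the `i`-th generator on pairs of a group element and a sign: it conjugates the
element, and flips the sign when the element is the generator itself. On reflections, this is the
action on roots. -/
noncomputable def signedConj (i : B) : Function.End (W × ZMod 2) := fun p =>
  open scoped Classical in
  (cs.simple i * p.1 * cs.simple i, p.2 + if p.1 = cs.simple i then 1 else 0)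

open scoped Classical in
theorem prod_map_signedConj_apply (ω : List B) (x : W) (a : ZMod 2) :
    (ω.map (signedConj cs)).prod (x, a) =
      (cs.wordProd ω * x * (cs.wordProd ω)⁻¹, a + (cs.rightInvSeq ω).count x) := by
  induction ω with
  | nil =>
    change (x, a) = _
    simp
  | cons i ω ih =>
    have hflip : cs.wordProd ω * x * (cs.wordProd ω)⁻¹ = cs.simple i ↔
        (cs.wordProd ω)⁻¹ * cs.simple i * cs.wordProd ω = x := by
      rw [mul_inv_eq_iff_eq_mul, mul_assoc, inv_mul_eq_iff_eq_mul, eq_comm]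
    rw [List.map_cons, List.prod_cons]
    change signedConj cs i ((ω.map (signedConj cs)).prod (x, a)) = _
    rw [ih]
    simp only [signedConj, hflip, rightInvSeq, wordProd_cons, List.count_cons, beq_iff_eq]
    push_cast
    simp [mul_assoc, add_assoc]

theorem prod_map_alternatingWord_two_mul {G : Type*} [Monoid G] (f : B → G) (i j : B) (m : ℕ) :
    ((alternatingWord i j (2 * m)).map f).prod = (f i * f j) ^ m := by
  induction m with
  | zero => simp [alternatingWord]
  | succ m ih =>
    rw [show 2 * (m + 1) = 2 * m + 1 + 1 by ring, alternatingWord_succ, alternatingWord_succ]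
    simp [ih, pow_succ]

theorem even_count_rightInvSeq_alternatingWord [DecidableEq W] (i j : B) (x : W) :
    Even ((cs.rightInvSeq (alternatingWord i j (2 * M i j))).count x) := by
  have periodic (n : ℕ) : cs.simple j * (cs.simple i * cs.simple j) ^ (M i j + n) =
      cs.simple j * (cs.simple i * cs.simple j) ^ n := by
    rw [pow_add, simple_mul_simple_pow, one_mul]
  rw [rightInvSeq_alternatingWord, List.count_reverse, two_mul, List.range_add, List.map_append,
    List.map_map, List.count_append]
  simp [Function.comp_def, periodic]

theorem isLiftable_signedConj : M.IsLiftable (signedConj cs) := by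
  classical
  intro i j
  have hprod : cs.wordProd (alternatingWord i j (2 * M i j)) = 1 := by
    rw [wordProd, prod_map_alternatingWord_two_mul, simple_mul_simple_pow]
  rw [← prod_map_alternatingWord_two_mul]
  funext ⟨x, a⟩
  rw [prod_map_signedConj_apply, hprod,
    (ZMod.natCast_eq_zero_iff_even).mpr (even_count_rightInvSeq_alternatingWord cs i j x)]
  change _ = (x, a)
  simp

/-- The action of `W` on `W × ZMod 2` extending `signedConj`. Since it is well defined, the parity
of the number of occurrences of `x` in `rightInvSeq ω` depends only on `x` and `wordProd ω`. -/
noncomputable def signedConjHom : W →* Function.End (W × ZMod 2) :=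
  cs.lift ⟨signedConj cs, isLiftable_signedConj cs⟩

theorem signedConjHom_simple (i : B) : signedConjHom cs (cs.simple i) = signedConj cs i :=
  cs.lift_apply_simple (isLiftable_signedConj cs) i

open scoped Classical in
theorem signedConjHom_wordProd_apply (ω : List B) (x : W) (a : ZMod 2) :
    signedConjHom cs (cs.wordProd ω) (x, a) =
      (cs.wordProd ω * x * (cs.wordProd ω)⁻¹, a + (cs.rightInvSeq ω).count x) := by
  rw [← prod_map_signedConj_apply, wordProd, map_list_prod, List.map_map]
  simp only [Function.comp_def, signedConjHom_simple]

theorem signedConjHom_apply_add (w x : W) (a b : ZMod 2) :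
    signedConjHom cs w (x, a + b) =
      ((signedConjHom cs w (x, a)).1, (signedConjHom cs w (x, a)).2 + b) := by
  obtain ⟨ω, rfl⟩ := cs.wordProd_surjective w
  simp only [signedConjHom_wordProd_apply, add_right_comm]

theorem signedConjHom_mul_apply (w w' : W) (p : W × ZMod 2) :
    signedConjHom cs (w * w') p = signedConjHom cs w (signedConjHom cs w' p) := by
  rw [map_mul]
  rfl

theorem signedConjHom_isReflection_apply_self {t : W} (ht : cs.IsReflection t) :
    signedConjHom cs t (t, 0) = (t, 1) := by
  obtain ⟨u, i, rfl⟩ := ht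
  set t := u * cs.simple i * u⁻¹ with ht
  obtain ⟨a, ha⟩ : ∃ a, signedConjHom cs u⁻¹ (t, 0) = (cs.simple i, a) := by
    obtain ⟨ω, hω⟩ := cs.wordProd_surjective u⁻¹
    rw [← hω, signedConjHom_wordProd_apply, hω]
    exact ⟨_, Prod.ext (by simp [ht, mul_assoc]) rfl⟩
  have hback : signedConjHom cs u (cs.simple i, a) = (t, 0) := by
    rw [← ha, ← signedConjHom_mul_apply, mul_inv_cancel, map_one]
    rfl
  have hflip : signedConjHom cs (cs.simple i) (cs.simple i, a) = (cs.simple i, a + 1) := by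
    simp [signedConjHom_simple, signedConj]
  calc signedConjHom cs t (t, 0)
      = signedConjHom cs u (signedConjHom cs (cs.simple i) (signedConjHom cs u⁻¹ (t, 0))) := by
        rw [← signedConjHom_mul_apply, ← signedConjHom_mul_apply]
    _ = signedConjHom cs u (cs.simple i, a + 1) := by rw [ha, hflip]
    _ = (t, 1) := by rw [signedConjHom_apply_add, hback, zero_add]

/-- Strong exchange: if `t` did not occur in `rightInvSeq ω`, then `w = wordProd ω` would keep the
sign of `t`, hence `w * t` would flip it, making `t` a right inversion of `w * t` and so not of
`w`. -/
theorem mem_rightInvSeq_of_isRightInversion {ω : List B} {t : W}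
    (h : cs.IsRightInversion (cs.wordProd ω) t) : t ∈ cs.rightInvSeq ω := by
  classical
  obtain ⟨ht, hlt⟩ := h
  obtain ⟨η, hη, hprod⟩ := cs.exists_isReduced (cs.wordProd ω * t)
  have hω : cs.wordProd ω = cs.wordProd η * t := by rw [← hprod, mul_assoc, ht.mul_self, mul_one]
  have hnot : t ∉ cs.rightInvSeq η := by
    intro hmem
    have hlt' := (cs.isRightInversion_of_mem_rightInvSeq hη hmem).2
    rw [← hω, ← hprod] at hlt'
    exact lt_asymm hlt hlt'
  have hsign := congrArg Prod.snd (signedConjHom_wordProd_apply cs ω t 0)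
  rw [hω, signedConjHom_mul_apply, signedConjHom_isReflection_apply_self cs ht,
    signedConjHom_wordProd_apply, List.count_eq_zero.mpr hnot] at hsign
  by_contra hmem
  simp [List.count_eq_zero.mpr hmem] at hsign

theorem exists_eq_mul_wordProd_concat {w v : W} {ω : List B} {i : B}
    (hw : w = v * cs.wordProd ω) (hlen : cs.length w = cs.length v + ω.length)
    (hi : cs.IsRightDescent w i) (hiω : cs.simple i ∉ cs.rightInvSeq ω) :
    ∃ v', w = v' * cs.wordProd (ω.concat i) ∧
      cs.length w = cs.length v' + (ω.concat i).length := by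
  obtain ⟨η, hη, rfl⟩ := cs.exists_isReduced v
  have hmem : cs.simple i ∈ cs.rightInvSeq (η ++ ω) := by
    apply mem_rightInvSeq_of_isRightInversion
    rw [wordProd_append, ← hw]
    exact ⟨cs.isReflection_simple i, hi⟩
  rw [rightInvSeq_append, List.mem_append, List.mem_map] at hmem
  obtain ⟨t, ht, hti⟩ := hmem.resolve_right hiω
  have hlt := (cs.isRightInversion_of_mem_rightInvSeq hη ht).2
  have hti' : cs.wordProd ω * cs.simple i = t * cs.wordProd ω := by
    rw [← hti]
    simp [mul_assoc]
  have htt : t * t = 1 := (cs.isReflection_of_mem_rightInvSeq η ht).mul_self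
  have hw' : w = cs.wordProd η * t * cs.wordProd (ω.concat i) := by
    rw [wordProd_concat, hti', hw, ← mul_assoc, mul_assoc (cs.wordProd η), htt, mul_one]
  refine ⟨_, hw', ?_⟩
  have hle := cs.length_mul_le (cs.wordProd η * t) (cs.wordProd (ω.concat i))
  have hle' := cs.length_wordProd_le (ω.concat i)
  rw [← hw'] at hle
  rw [List.length_concat] at hle' ⊢
  lia

theorem exists_eq_mul_alternatingWord {w : W} {s t : B} (hs : cs.IsRightDescent w s)
    (ht : cs.IsRightDescent w t) {k : ℕ} (hk : M s t = 0 ∨ k ≤ M s t) :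
    ∃ v, w = v * cs.wordProd (alternatingWord s t k) ∧ cs.length w = cs.length v + k := by
  induction k generalizing s t with
  | zero => exact ⟨w, by simp [alternatingWord], rfl⟩
  | succ k ih =>
    have hk' : M t s = 0 ∨ k < M t s := by rwa [M.symmetric t s]
    obtain ⟨v, hv, hlen⟩ := ih ht hs (hk'.imp_right le_of_lt)
    simpa only [alternatingWord_succ, List.length_concat, length_alternatingWord] using
      exists_eq_mul_wordProd_concat cs hv (by rwa [length_alternatingWord]) ht
        (simple_notMem_rightInvSeq_alternatingWord cs hk')

theorem ne_zero_of_isRightDescent {w : W} {s t : B} (hs : cs.IsRightDescent w s)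
    (ht : cs.IsRightDescent w t) : M s t ≠ 0 := by
  intro h
  obtain ⟨v, -, hlen⟩ := exists_eq_mul_alternatingWord cs hs ht (k := cs.length w + 1) (.inl h)
  lia

theorem exists_eq_mul_longest {w : W} {s t : B} (hs : cs.IsRightDescent w s)
    (ht : cs.IsRightDescent w t) :
    ∃ v, w = v * longest cs s t ∧ cs.length w = cs.length v + cs.length (longest cs s t) := by
  obtain ⟨v, hv, hlen⟩ := exists_eq_mul_alternatingWord cs hs ht (.inr le_rfl)
  refine ⟨v, hv, le_antisymm (hv ▸ cs.length_mul_le _ _) ?_⟩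
  have hle := cs.length_wordProd_le (alternatingWord s t (M s t))
  rw [length_alternatingWord] at hle
  rw [longest]
  lia

theorem isComplex_of_isRightDescent {w : W} {s t : B} (hst : Noncomm M s t)
    (hs : cs.IsRightDescent w s) (ht : cs.IsRightDescent w t) : IsComplex cs w := by
  obtain ⟨v, hv, hlen⟩ := exists_eq_mul_longest cs hs ht
  exact ⟨s, t, hst.resolve_left (ne_zero_of_isRightDescent cs hs ht), v, 1,
    by rw [mul_one, hv], by rw [cs.length_one, add_zero, hlen]⟩

theorem reverse_alternatingWord (i j : B) (k : ℕ) :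
    (alternatingWord i j k).reverse =
      if Even k then alternatingWord j i k else alternatingWord i j k := by
  induction k generalizing i j with
  | zero => simp [alternatingWord]
  | succ k ih =>
    have hcons : (alternatingWord i j (k + 1)).reverse = j :: (alternatingWord j i k).reverse := by
      simp [alternatingWord_succ]
    rw [hcons, ih, alternatingWord_succ' i j, alternatingWord_succ' j i]
    by_cases hk : Even k <;> simp [hk, Nat.even_add_one]

theorem inv_longest (s t : B) : (longest cs s t)⁻¹ = longest cs s t := by
  rw [longest, ← wordProd_reverse, reverse_alternatingWord]
  split_ifs
  · simpa only [braidWord, M.symmetric t s] using cs.wordProd_braidWord_eq t s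
  · rfl

theorem IsComplex.inv {cs : CoxeterSystem M W} {w : W} (hw : IsComplex cs w) :
    IsComplex cs w⁻¹ := by
  obtain ⟨s, t, hst, x, y, rfl, hlen⟩ := hw
  refine ⟨s, t, hst, y⁻¹, x⁻¹, ?_, ?_⟩
  · rw [mul_inv_rev, mul_inv_rev, inv_longest, mul_assoc]
  · simp only [length_inv, hlen]
    ring

theorem FullyComm.inv {cs : CoxeterSystem M W} {w : W} (hw : FullyComm cs w) :
    FullyComm cs w⁻¹ :=
  fun h => hw (inv_inv w ▸ h.inv)

/-- If `w` is fully commutative then the elements of `𝓛(w)` pairwise commute and the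
elements of `𝓡(w)` pairwise commute: for `s, t ∈ S` with `m(s,t) ≥ 3` it is impossible
that both `ℓ(sw) < ℓ(w)` and `ℓ(tw) < ℓ(w)`, and likewise on the right. -/
theorem statement4 (w : W) (hw : FullyComm cs w) (s t : B) (hst : Noncomm M s t) :
    ¬ (cs.IsLeftDescent w s ∧ cs.IsLeftDescent w t) ∧
    ¬ (cs.IsRightDescent w s ∧ cs.IsRightDescent w t) := by
  have right {x : W} (hx : FullyComm cs x) :
      ¬ (cs.IsRightDescent x s ∧ cs.IsRightDescent x t) :=
    fun ⟨hs, ht⟩ => hx (isComplex_of_isRightDescent cs hst hs ht)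
  refine ⟨?_, right hw⟩
  simpa only [isRightDescent_inv_iff] using right hw.inv
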